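/- Let h > 0 and let T be a real number with T < K(h). Then there exists m > 0 such that h < 2/(cosh m − 1) and T < 2m·(cosh m − 1)/(cosh m + 1). -/

import Mathlib

/-- The threshold function `K(r) = (2/(1+r))·log(1 + (2/r)(1 + √(1+r)))`. -/
noncomputable def Kfun (r : ℝ) : ℝ :=
  (2 / (1 + r)) * Real.log (1 + (2 / r) * (1 + Real.sqrt (1 + r)))

/-! The stability requirement `h < 2 / (cosh m - 1)` says that `m` lies below the critical value
`arcosh (1 + 2 / h)`, and `K h` is exactly the variation bound `2 m (cosh m - 1) / (cosh m + 1)` at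
that critical value. By continuity, the bound still exceeds `T` slightly below it. -/

open Set
open Real (arcosh cosh)

theorem exists_mem_Ioo_lt_of_lowerSemicontinuousWithinAt {α β : Type*}
    [LinearOrder α] [DenselyOrdered α] [TopologicalSpace α] [OrderTopology α] [Preorder β]
    {f : α → β} {a b : α} {y : β} (hf : LowerSemicontinuousWithinAt f (Iio b) b)
    (hab : a < b) (hy : y < f b) : ∃ x ∈ Ioo a b, y < f x :=
  have := nhdsLT_neBot_of_exists_lt ⟨a, hab⟩
  (Filter.Eventually.and (Ioo_mem_nhdsLT hab) (hf y hy)).exists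

theorem cosh_lt_iff_lt_arcosh {m x : ℝ} (hm : 0 ≤ m) (hx : 0 < x) :
    cosh m < x ↔ m < arcosh x := by
  rw [← Real.arcosh_lt_arcosh (Real.cosh_pos m) hx, Real.arcosh_cosh hm]

theorem lt_two_div_cosh_sub_one_iff {m r : ℝ} (hm : 0 < m) (hr : 0 < r) :
    r < 2 / (cosh m - 1) ↔ m < arcosh (1 + 2 / r) := by
  have hcosh : 0 < cosh m - 1 := sub_pos.2 (Real.one_lt_cosh.2 hm.ne')
  rw [lt_div_comm₀ hr hcosh, sub_lt_iff_lt_add', cosh_lt_iff_lt_arcosh hm.le (by positivity)]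

theorem arcosh_one_add_two_div {r : ℝ} (hr : 0 < r) :
    arcosh (1 + 2 / r) = Real.log (1 + 2 / r * (1 + √(1 + r))) := by
  have hsq : (1 + 2 / r) ^ 2 - 1 = (2 / r) ^ 2 * (1 + r) := by
    field_simp
    ring
  have hsqrt : √((1 + 2 / r) ^ 2 - 1) = 2 / r * √(1 + r) := by
    rw [hsq, Real.sqrt_mul (sq_nonneg _), Real.sqrt_sq (by positivity)]
  rw [arcosh, hsqrt, mul_one_add, add_assoc]

/-- The bound `2 m c(m)`, with `c(m) = (cosh m - 1) / (cosh m + 1)`, on the total variation of the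
initial data. It is written as a single fraction, with `c(m)` expanded. -/
noncomputable def variationBound (m : ℝ) : ℝ :=
  2 * m * (cosh m - 1) / (cosh m + 1)

theorem continuous_variationBound : Continuous variationBound := by
  have hcosh (m : ℝ) : cosh m + 1 ≠ 0 := (add_pos (Real.cosh_pos m) one_pos).ne'
  unfold variationBound
  fun_prop (disch := exact hcosh _)

theorem variationBound_arcosh {x : ℝ} (hx : 1 ≤ x) :
    variationBound (arcosh x) = 2 * arcosh x * (x - 1) / (x + 1) := by
  rw [variationBound, Real.cosh_arcosh hx]

theorem Kfun_eq_variationBound_arcosh {r : ℝ} (hr : 0 < r) :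
    Kfun r = variationBound (arcosh (1 + 2 / r)) := by
  have hle : 1 ≤ 1 + 2 / r := le_add_of_nonneg_right (by positivity)
  rw [Kfun, ← arcosh_one_add_two_div hr, variationBound_arcosh hle]
  field_simp
  ring

/-- Choice of the parameter `m₀` in the final step of the existence proof. -/
theorem stmt13 (h T : ℝ) (hh : 0 < h) (hT : T < Kfun h) :
    ∃ m : ℝ, 0 < m ∧ h < 2 / (Real.cosh m - 1) ∧
      T < 2 * m * (Real.cosh m - 1) / (Real.cosh m + 1) := by
  have hcrit_pos : 0 < arcosh (1 + 2 / h) :=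
    Real.arcosh_pos (lt_add_of_pos_right 1 (by positivity))
  rw [Kfun_eq_variationBound_arcosh hh] at hT
  obtain ⟨m, ⟨hm_pos, hm_lt⟩, hTm⟩ := exists_mem_Ioo_lt_of_lowerSemicontinuousWithinAt
    (continuous_variationBound.lowerSemicontinuous.lowerSemicontinuousWithinAt _ _) hcrit_pos hT
  exact ⟨m, hm_pos, (lt_two_div_cosh_sub_one_iff hm_pos hh).2 hm_lt, hTm⟩
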